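/- arXiv:1807.07384 — 4 statements merged into one kernel-verified Lean document; each statement's English description precedes it below -/
import Mathlib

section
/- Let n ≥ 1. For each i = 0,…,n let u_i ∈ ℝ^n, let a_i be an arbitrary (n−1)×n real matrix and B_i an (n−1)×(n−1) real matrix. Let M be the (n+1)n × (n+1)n real matrix whose rows are grouped into n+1 blocks of n rows (one block per index i) and whose columns are grouped as: one column c_r, then n columns c_z, then for each j = 0,…,n a group of n−1 columns c_j, with entries given by: in row block i, the first row is (1 | u_i^T | 0 | ⋯ | 0); the remaining n−1 rows are (0 | a_i | 0 | ⋯ | B_i | ⋯ | 0), where B_i occupies the column group c_i and all other column groups c_j (j ≠ i) are zero. Then |det M| = |det V| · ∏_{i=0}^n |det B_i|, where V is the (n+1)×(n+1) matrix whose i-th row is (1, u_i^T). -/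
/-!
List the first rows of all the row blocks before the remaining ones. The first rows vanish on the
column groups `c_j`, so the matrix becomes block lower triangular, with the matrix `V` in the upper
left corner and the block diagonal matrix of the `Bᵢ` in the lower right one. Permuting rows or
columns only affects the sign of the determinant.
-/

open Matrix

section BlockDeterminant

variable {R k l m m' n n' p : Type*}
  [Fintype k] [DecidableEq k] [Fintype l] [DecidableEq l] [Fintype p] [DecidableEq p]

theorem det_comp_diagonal [CommRing R] (D : k → Matrix l l R) :
    (comp k k l l R (diagonal D)).det = ∏ i, (D i).det := by
  rw [comp_diagonal, det_reindex_self, det_blockDiagonal]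

variable [CommRing R] [LinearOrder R] [IsStrictOrderedRing R]

theorem abs_det_submatrix_equiv_congr (A : Matrix m n R)
    (r₁ : k ≃ m) (c₁ : k ≃ n) (r₂ : l ≃ m) (c₂ : l ≃ n) :
    |(A.submatrix r₁ c₁).det| = |(A.submatrix r₂ c₂).det| := by
  rw [← abs_det_submatrix_equiv_equiv (r₁.trans r₂.symm) (c₁.trans c₂.symm) (A.submatrix r₂ c₂),
    submatrix_submatrix]
  simp only [Equiv.coe_trans, ← Function.comp_assoc, Equiv.self_comp_symm, Function.id_comp]

theorem abs_det_submatrix_fromBlocks_zero₁₂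
    (A : Matrix m m' R) (C : Matrix n m' R) (D : Matrix n n' R)
    (rA : k ≃ m) (cA : k ≃ m') (rD : l ≃ n) (cD : l ≃ n')
    (r : p ≃ m ⊕ n) (c : p ≃ m' ⊕ n') :
    |((fromBlocks A 0 C D).submatrix r c).det|
      = |(A.submatrix rA cA).det| * |(D.submatrix rD cD).det| := by
  have block_form : (fromBlocks A 0 C D).submatrix (rA.sumCongr rD) (cA.sumCongr cD)
      = fromBlocks (A.submatrix rA cA) 0 (C.submatrix rD cA) (D.submatrix rD cD) := by
    ext (_ | _) (_ | _) <;> rfl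
  rw [abs_det_submatrix_equiv_congr _ r c (rA.sumCongr rD) (cA.sumCongr cD), block_form,
    det_fromBlocks_zero₁₂, abs_mul]

end BlockDeterminant

theorem abs_det_blaschke_petkantschin_block_matrix_general
    {R ι σ κ τ k p : Type*} [CommRing R] [LinearOrder R] [IsStrictOrderedRing R]
    [Fintype ι] [DecidableEq ι] [Fintype κ] [DecidableEq κ]
    [Fintype k] [DecidableEq k] [Fintype p] [DecidableEq p]
    (V : Matrix k k R) (B : ι → Matrix κ κ R) (M : Matrix (ι × (σ ⊕ κ)) (τ ⊕ ι × κ) R)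
    (rV : k ≃ ι × σ) (cV : k ≃ τ)
    (hV : ∀ x y, M ((rV x).1, Sum.inl (rV x).2) (Sum.inl (cV y)) = V x y)
    (h0 : ∀ i s q, M (i, Sum.inl s) (Sum.inr q) = 0)
    (hB : ∀ i l j m, M (i, Sum.inr l) (Sum.inr (j, m)) = if j = i then B i l m else 0)
    (r : p ≃ ι × (σ ⊕ κ)) (c : p ≃ τ ⊕ ι × κ) :
    |(M.submatrix r c).det| = |V.det| * ∏ i, |(B i).det| := by
  let split := Equiv.prodSumDistrib ι σ κ
  let N := M.submatrix split.symm id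
  have upper_right : N.toBlocks₁₂ = 0 := by
    ext ⟨i, s⟩ q
    exact h0 i s q
  have lower_right : N.toBlocks₂₂ = comp ι ι κ κ R (diagonal B) := by
    ext ⟨i, l⟩ ⟨j, m⟩
    refine (hB i l j m).trans ?_
    rcases eq_or_ne j i with rfl | hji
    · simp
    · simp [hji, hji.symm]
  have upper_left : N.toBlocks₁₁.submatrix rV cV = V := by
    ext x y
    exact hV x y
  have reordered : M.submatrix r c
      = (fromBlocks N.toBlocks₁₁ 0 N.toBlocks₂₁ (comp ι ι κ κ R (diagonal B))).submatrix
          (r.trans split) c := by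
    rw [← upper_right, ← lower_right, fromBlocks_toBlocks]
    ext x y
    simp [N]
  rw [reordered, abs_det_submatrix_fromBlocks_zero₁₂ _ _ _ rV cV (Equiv.refl _) (Equiv.refl _),
    upper_left, Equiv.coe_refl, submatrix_id_id, det_comp_diagonal, Finset.abs_prod]

/-- **Block-determinant factorization for the Blaschke–Petkantschin Jacobian matrix.**
Let `n ≥ 1`. For `i = 0,…,n` let `uᵢ ∈ ℝⁿ`, `aᵢ` an arbitrary `(n-1)×n` matrix and `Bᵢ` an
`(n-1)×(n-1)` matrix. Let `M` be the `(n+1)n × (n+1)n` matrix with rows grouped in `n+1`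
blocks of `n` rows and columns grouped as one column `c_r`, `n` columns `c_z`, and for each
`j = 0,…,n` a group of `n-1` columns `c_j`: in row block `i` the first row is
`(1 | uᵢᵀ | 0 | ⋯ | 0)` and the remaining `n-1` rows are `(0 | aᵢ | 0 ⋯ Bᵢ ⋯ 0)` with `Bᵢ`
occupying column group `c_i`. Then (for any identification `e` of the row and column index
types) `|det M| = |det V| · ∏ᵢ |det Bᵢ|`, where `V` is the `(n+1)×(n+1)` matrix whose `i`-th
row is `(1, uᵢᵀ)`. -/
theorem abs_det_blaschke_petkantschin_block_matrix
    (n : ℕ) (hn : 1 ≤ n)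
    (u : Fin (n + 1) → Fin n → ℝ)
    (a : Fin (n + 1) → Matrix (Fin (n - 1)) (Fin n) ℝ)
    (B : Fin (n + 1) → Matrix (Fin (n - 1)) (Fin (n - 1)) ℝ)
    (M : Matrix (Fin (n + 1) × (Unit ⊕ Fin (n - 1)))
          ((Unit ⊕ Fin n) ⊕ Fin (n + 1) × Fin (n - 1)) ℝ)
    (hM1 : ∀ i, M (i, Sum.inl ()) (Sum.inl (Sum.inl ())) = 1)
    (hMu : ∀ i j, M (i, Sum.inl ()) (Sum.inl (Sum.inr j)) = u i j)
    (hM0 : ∀ i p, M (i, Sum.inl ()) (Sum.inr p) = 0)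
    (hMr : ∀ i l, M (i, Sum.inr l) (Sum.inl (Sum.inl ())) = 0)
    (hMa : ∀ i l j, M (i, Sum.inr l) (Sum.inl (Sum.inr j)) = a i l j)
    (hMB : ∀ i l j m, M (i, Sum.inr l) (Sum.inr (j, m)) = if j = i then B i l m else 0)
    (e : Fin (n + 1) × (Unit ⊕ Fin (n - 1)) ≃ (Unit ⊕ Fin n) ⊕ Fin (n + 1) × Fin (n - 1)) :
    |(M.submatrix id e).det|
      = |(Matrix.of fun i j => Fin.cons (1 : ℝ) (u i) j).det| * ∏ i, |(B i).det| := by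
  let c : Fin (n + 1) ≃ Unit ⊕ Fin n :=
    (finSuccEquiv n).trans ((Equiv.optionEquivSumPUnit _).trans (Equiv.sumComm _ _))
  exact abs_det_blaschke_petkantschin_block_matrix_general _ B M (Equiv.prodPUnit _).symm c
    (fun i => Fin.cases (hM1 i) (hMu i)) (fun i _ => hM0 i) hMB (Equiv.refl _) e
end

section
/- Let d ≥ 1, let c_1, …, c_d ∈ ℝ, and let A_0, A_1, B_0, B_1 : (0,∞) → (d×d real matrices) satisfy, as r → 0⁺: (A_i)(r)_{mm} = 1 − (c_m/2)·r² + o(r²) for i = 0,1 and each m; (A_i)(r)_{lm} = o(r) for l ≠ m; (B_0)(r)_{mm} = r − (c_m/6)·r³ + o(r³); (B_1)(r)_{mm} = −(r − (c_m/6)·r³) + o(r³); and (B_i)(r)_{lm} = o(r²) for l ≠ m. Let D(r) be the 2d × 2d block matrix [[A_0(r), B_0(r)], [A_1(r), B_1(r)]]. Then |det D(r)| = 2^d·(r^d − (2/3)·(c_1 + ⋯ + c_d)·r^{d+2}) + o(r^{d+2}) as r → 0⁺. -/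
open Asymptotics Filter
open scoped Topology

/-!
Pairing the `m`-th with the `(d + m)`-th index singles out `d` blocks of size `2 × 2`. A permutation
that does not preserve the pairs uses at least two entries outside these blocks, and each such entry
is smaller by a factor `o(r)` than the size `1` or `r` of its column, so up to
`o(r ^ (d + 2))` the determinant is the product of the `2 × 2` minors. Each minor equals
`-2 (r - (2/3) c_m r³) + o(r³)`, the `2/3` being `1/2 + 1/6`, and the product expands to first
order in `r²`. Since `r ^ d` dominates `r ^ (d + 2)`, taking absolute values only removes the sign
`(-1) ^ d`.
-/

section BlockDiagonalPart

theorem exists_ne_apply_perm_ne {ι β : Type*} [Finite ι] (b : ι → β) (σ : Equiv.Perm ι) {i : ι}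
    (hi : b (σ i) ≠ b i) : ∃ j ≠ i, b (σ j) ≠ b j := by
  classical
  cases nonempty_fintype ι
  by_contra! hfix
  -- As formal sums of labels, `b ∘ σ` and `b` agree, so a single mismatch cannot occur.
  have hsum : ∑ j, Finsupp.single (b (σ j)) (1 : ℤ) = ∑ j, Finsupp.single (b j) 1 :=
    Equiv.sum_comp σ fun j => Finsupp.single (b j) 1
  rw [← Finset.add_sum_erase _ _ (Finset.mem_univ i),
    ← Finset.add_sum_erase _ _ (Finset.mem_univ i),
    Finset.sum_congr rfl fun j hj => by rw [hfix j (Finset.ne_of_mem_erase hj)]] at hsum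
  exact hi (Finsupp.single_left_injective one_ne_zero (add_right_cancel hsum))

variable {ι β α R 𝕜 : Type*} [NormedField 𝕜] {l : Filter α} {M : α → Matrix ι ι 𝕜}
  {w : ι → α → 𝕜} {ε : α → 𝕜}

theorem prod_perm_isLittleO [Fintype ι] (b : ι → β)
    (hM : ∀ i j, (fun a => M a i j) =O[l] w j)
    (hoff : ∀ i j, b i ≠ b j → (fun a => M a i j) =o[l] fun a => ε a * w j a)
    (σ : Equiv.Perm ι) {i : ι} (hi : b (σ i) ≠ b i) :
    (fun a => ∏ k, M a (σ k) k) =o[l] fun a => ε a ^ 2 * ∏ k, w k a := by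
  classical
  obtain ⟨j, hji, hj⟩ := exists_ne_apply_perm_ne b σ hi
  have hsplit (f : ι → 𝕜) : ∏ k, f k = f i * (f j * ∏ k ∈ (Finset.univ.erase i).erase j, f k) := by
    rw [Finset.mul_prod_erase _ _ (Finset.mem_erase.2 ⟨hji, Finset.mem_univ j⟩),
      Finset.mul_prod_erase _ _ (Finset.mem_univ i)]
  simp only [hsplit]
  refine ((hoff _ _ hi).mul ((hoff _ _ hj).mul_isBigO
    (IsBigO.finsetProd fun k _ => hM (σ k) k))).congr_right fun a => ?_
  ring

variable [DecidableEq β]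

/-- The block diagonal part of `M` for the partition of the indices into the fibres of `b`:
entries whose row and column lie in different fibres are replaced by `0`. -/
def blockDiagonalPart [Zero R] (b : ι → β) (M : Matrix ι ι R) : Matrix ι ι R :=
  Matrix.of fun i j => if b i = b j then M i j else 0

variable [Fintype ι] [DecidableEq ι]

theorem det_blockDiagonalPart_fromBlocks [CommRing R] (A B C D : Matrix ι ι R) :
    (blockDiagonalPart (Sum.elim id id) (Matrix.fromBlocks A B C D)).det =
      ∏ m, (A m m * D m m - B m m * C m m) := by
  let e : Fin 2 × ι ≃ ι ⊕ ι :=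
    (Equiv.prodCongr finTwoEquiv (Equiv.refl ι)).trans (Equiv.boolProdEquivSum ι)
  have hblocks : (blockDiagonalPart (Sum.elim id id) (Matrix.fromBlocks A B C D)).submatrix e e =
      Matrix.blockDiagonal fun m => !![A m m, B m m; C m m, D m m] := by
    ext ⟨i, k⟩ ⟨j, l⟩
    by_cases hkl : k = l <;> fin_cases i <;> fin_cases j <;>
      simp [e, finTwoEquiv, blockDiagonalPart, Matrix.blockDiagonal_apply, hkl]
  rw [← Matrix.det_submatrix_equiv_self e, hblocks, Matrix.det_blockDiagonal]
  simp only [Matrix.det_fin_two_of]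

theorem det_sub_det_blockDiagonalPart_isLittleO (b : ι → β)
    (hM : ∀ i j, (fun a => M a i j) =O[l] w j)
    (hoff : ∀ i j, b i ≠ b j → (fun a => M a i j) =o[l] fun a => ε a * w j a) :
    (fun a => (M a).det - (blockDiagonalPart b (M a)).det) =o[l]
      fun a => ε a ^ 2 * ∏ i, w i a := by
  simp only [Matrix.det_apply', ← Finset.sum_sub_distrib, ← mul_sub]
  refine IsLittleO.fun_sum fun σ _ => IsLittleO.const_mul_left ?_ _
  by_cases hσ : ∀ i, b (σ i) = b i
  · simpa only [blockDiagonalPart, Matrix.of_apply, hσ, if_true, sub_self] using isLittleO_zero _ _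
  · push Not at hσ
    obtain ⟨i, hi⟩ := hσ
    have hzero (a : α) : ∏ k, blockDiagonalPart b (M a) (σ k) k = 0 :=
      Finset.prod_eq_zero (Finset.mem_univ i) (if_neg hi)
    simpa only [hzero, sub_zero] using prod_perm_isLittleO b hM hoff σ hi

end BlockDiagonalPart

/-- The first-order expansion `f = s x (1 + c t) + o(x t)` along `l`, in a small parameter `t` and
relative to a reference size `x`. The constant `s` is kept out of `x` and of the error term, so
that `s = 0` makes sense. -/
def HasRelativeExpansion {α 𝕜 : Type*} [NormedField 𝕜] (l : Filter α) (t x : α → 𝕜) (s c : 𝕜)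
    (f : α → 𝕜) : Prop :=
  (fun a => f a - s * (x a * (1 + c * t a))) =o[l] fun a => x a * t a

namespace HasRelativeExpansion

variable {α ι 𝕜 : Type*} [NormedField 𝕜] {l : Filter α} {t x y f g : α → 𝕜} {s s' c c' : 𝕜}

theorem leadingTerm_isBigO (ht : Tendsto t l (𝓝 0)) (s c : 𝕜) :
    (fun a => s * (x a * (1 + c * t a))) =O[l] x := by
  have hone : (fun a => 1 + c * t a) =O[l] fun _ => (1 : 𝕜) :=
    (tendsto_const_nhds.add (tendsto_const_nhds.mul ht)).isBigO_one 𝕜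
  simpa only [mul_one] using ((isBigO_refl x l).mul hone).const_mul_left s

protected theorem isBigO (hf : HasRelativeExpansion l t x s c f) (ht : Tendsto t l (𝓝 0)) :
    f =O[l] x := by
  have herror : (fun a => x a * t a) =O[l] x := by
    simpa only [mul_one] using (isBigO_refl x l).mul (ht.isBigO_one 𝕜)
  simpa only [sub_add_cancel] using
    ((IsLittleO.isBigO hf).trans herror).add (leadingTerm_isBigO ht s c)

theorem sub (hf : HasRelativeExpansion l t x s c f) (hg : HasRelativeExpansion l t x s' c g) :
    HasRelativeExpansion l t x (s - s') c fun a => f a - g a :=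
  (IsLittleO.sub hf hg).congr_left fun a => by ring

theorem mul (hf : HasRelativeExpansion l t x s c f) (hg : HasRelativeExpansion l t y s' c' g)
    (ht : Tendsto t l (𝓝 0)) :
    HasRelativeExpansion l t (fun a => x a * y a) (s * s') (c + c') fun a => f a * g a := by
  have hleft := (IsLittleO.mul_isBigO hf (hg.isBigO ht)).congr_right
    (g₂ := fun a => x a * y a * t a) fun a => by ring
  have hright := ((leadingTerm_isBigO (x := x) ht s c).mul_isLittleO hg).congr_right
    (g₂ := fun a => x a * y a * t a) fun a => by ring
  have hquadratic : (fun a => s * s' * (c * c') * (x a * y a * t a * t a)) =o[l]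
      fun a => x a * y a * t a := by
    simpa only [mul_one] using
      ((isBigO_refl (fun a => x a * y a * t a) l).mul_isLittleO
        ((isLittleO_one_iff 𝕜).2 ht)).const_mul_left (s * s' * (c * c'))
  exact ((hleft.add hright).add hquadratic).congr_left fun a => by ring

theorem prod {f : ι → α → 𝕜} {c : ι → 𝕜} (ht : Tendsto t l (𝓝 0)) (S : Finset ι)
    (hf : ∀ m ∈ S, HasRelativeExpansion l t x s (c m) (f m)) :
    HasRelativeExpansion l t (fun a => x a ^ S.card) (s ^ S.card) (∑ m ∈ S, c m)
      fun a => ∏ m ∈ S, f m a := by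
  induction S using Finset.cons_induction with
  | empty => simp [HasRelativeExpansion]
  | cons m S hm ih =>
    simp only [Finset.prod_cons, Finset.sum_cons, Finset.card_cons, pow_succ']
    exact (hf m (Finset.mem_cons_self m S)).mul
      (ih fun k hk => hf k (Finset.mem_cons_of_mem hk)) ht

end HasRelativeExpansion

theorem tendsto_sq_of_le_nhds_zero {𝕜 : Type*} [NormedField 𝕜] {l : Filter 𝕜} (hl : l ≤ 𝓝 0) :
    Tendsto (fun r : 𝕜 => r ^ 2) l (𝓝 0) :=
  ((continuous_pow 2).tendsto' 0 0 (by simp)).mono_left hl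

/-- The expansions, in the parameter `r`, of the coefficient matrices `A` and `B` of the Jacobi
fields along the geodesic `r ↦ exp_z (s r u)`, for `s = ± 1` and with `c m` the sectional curvature
`K_z(u, v_m)`: the columns of `A` come from moving the base point `z`, those of `B` from moving the
direction `u`. For other `s` only the leading factor of `B` is changed. -/
structure HasJacobiExpansion {ι 𝕜 : Type*} [NormedField 𝕜] (l : Filter 𝕜) (c : ι → 𝕜) (s : 𝕜)
    (A B : 𝕜 → Matrix ι ι 𝕜) : Prop where
  base_diag : ∀ m, (fun r => A r m m - (1 - c m / 2 * r ^ 2)) =o[l] fun r => r ^ 2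
  base_off : ∀ i j, i ≠ j → (fun r => A r i j) =o[l] fun r => r
  dir_diag : ∀ m, (fun r => B r m m - s * (r - c m / 6 * r ^ 3)) =o[l] fun r => r ^ 3
  dir_off : ∀ i j, i ≠ j → (fun r => B r i j) =o[l] fun r => r ^ 2

namespace HasJacobiExpansion

variable {ι 𝕜 : Type*} [NormedField 𝕜] {l : Filter 𝕜} {c : ι → 𝕜} {s s₀ s₁ : 𝕜}
  {A B A₀ B₀ A₁ B₁ : 𝕜 → Matrix ι ι 𝕜}

theorem base_diag_expansion (h : HasJacobiExpansion l c s A B) (m : ι) :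
    HasRelativeExpansion l (fun r => r ^ 2) (fun _ => 1) 1 (-(c m / 2)) fun r => A r m m :=
  (h.base_diag m).congr (fun r => by ring) fun r => by ring

theorem dir_diag_expansion (h : HasJacobiExpansion l c s A B) (m : ι) :
    HasRelativeExpansion l (fun r => r ^ 2) (fun r => r) s (-(c m / 6)) fun r => B r m m :=
  (h.dir_diag m).congr (fun r => by ring) fun r => by ring

theorem base_isBigO (h : HasJacobiExpansion l c s A B) (hl : l ≤ 𝓝 0) (i j : ι) :
    (fun r => A r i j) =O[l] fun _ => (1 : 𝕜) := by
  rcases eq_or_ne i j with rfl | hij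
  · exact (h.base_diag_expansion i).isBigO (tendsto_sq_of_le_nhds_zero hl)
  · exact (h.base_off i j hij).isBigO.trans ((tendsto_id.mono_left hl).isBigO_one 𝕜)

theorem dir_isBigO (h : HasJacobiExpansion l c s A B) (hl : l ≤ 𝓝 0) (i j : ι) :
    (fun r => B r i j) =O[l] fun r => r := by
  rcases eq_or_ne i j with rfl | hij
  · exact (h.dir_diag_expansion i).isBigO (tendsto_sq_of_le_nhds_zero hl)
  · exact (h.dir_off i j hij).isBigO.trans ((isLittleO_pow_id one_lt_two).mono hl).isBigO

theorem minor_expansion [CharZero 𝕜] (h₀ : HasJacobiExpansion l c s₀ A₀ B₀)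
    (h₁ : HasJacobiExpansion l c s₁ A₁ B₁) (hl : l ≤ 𝓝 0) (m : ι) :
    HasRelativeExpansion l (fun r => r ^ 2) (fun r => r) (s₁ - s₀) (-(2 / 3 * c m))
      fun r => A₀ r m m * B₁ r m m - B₀ r m m * A₁ r m m := by
  have hcoeff : -(c m / 2) + -(c m / 6) = -(2 / 3 * c m) := by ring
  have hmul {s s' : 𝕜} {A B A' B' : 𝕜 → Matrix ι ι 𝕜} (h : HasJacobiExpansion l c s A B)
      (h' : HasJacobiExpansion l c s' A' B') :
      HasRelativeExpansion l (fun r => r ^ 2) (fun r => r) s' (-(2 / 3 * c m))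
        fun r => A r m m * B' r m m := by
    simpa only [one_mul, hcoeff] using
      (h.base_diag_expansion m).mul (h'.dir_diag_expansion m) (tendsto_sq_of_le_nhds_zero hl)
  simpa only [mul_comm] using (hmul h₀ h₁).sub (hmul h₁ h₀)

variable [Fintype ι] [DecidableEq ι]

theorem det_fromBlocks_sub_prod_isLittleO (h₀ : HasJacobiExpansion l c s₀ A₀ B₀)
    (h₁ : HasJacobiExpansion l c s₁ A₁ B₁) (hl : l ≤ 𝓝 0) :
    (fun r => (Matrix.fromBlocks (A₀ r) (B₀ r) (A₁ r) (B₁ r)).det -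
        ∏ m, (A₀ r m m * B₁ r m m - B₀ r m m * A₁ r m m))
      =o[l] fun r => r ^ (Fintype.card ι + 2) := by
  let columnSize : ι ⊕ ι → 𝕜 → 𝕜 := Sum.elim (fun _ _ => 1) fun _ r => r
  have hdet := det_sub_det_blockDiagonalPart_isLittleO (l := l) (Sum.elim id id : ι ⊕ ι → ι)
    (M := fun r => Matrix.fromBlocks (A₀ r) (B₀ r) (A₁ r) (B₁ r)) (w := columnSize) (ε := id)
    (by
      rintro (i | i) (j | j)
      exacts [h₀.base_isBigO hl i j, h₀.dir_isBigO hl i j,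
        h₁.base_isBigO hl i j, h₁.dir_isBigO hl i j])
    (by
      rintro (i | i) (j | j) hij
      · simpa [columnSize] using h₀.base_off i j hij
      · simpa [columnSize, ← pow_two] using h₀.dir_off i j hij
      · simpa [columnSize] using h₁.base_off i j hij
      · simpa [columnSize, ← pow_two] using h₁.dir_off i j hij)
  simp only [det_blockDiagonalPart_fromBlocks] at hdet
  refine hdet.congr_right fun r => ?_
  simp [columnSize, Fintype.prod_sum_type, pow_add, mul_comm]

theorem det_fromBlocks_expansion [CharZero 𝕜] (h₀ : HasJacobiExpansion l c s₀ A₀ B₀)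
    (h₁ : HasJacobiExpansion l c s₁ A₁ B₁) (hl : l ≤ 𝓝 0) :
    (fun r => (Matrix.fromBlocks (A₀ r) (B₀ r) (A₁ r) (B₁ r)).det -
        (s₁ - s₀) ^ Fintype.card ι *
          (r ^ Fintype.card ι - 2 / 3 * (∑ m, c m) * r ^ (Fintype.card ι + 2)))
      =o[l] fun r => r ^ (Fintype.card ι + 2) := by
  have hprod := HasRelativeExpansion.prod (tendsto_sq_of_le_nhds_zero hl) Finset.univ
    fun m _ => h₀.minor_expansion h₁ hl m
  simp only [HasRelativeExpansion, Finset.card_univ, Finset.sum_neg_distrib, ← Finset.mul_sum,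
    ← pow_add] at hprod
  exact ((h₀.det_fromBlocks_sub_prod_isLittleO h₁ hl).add hprod).congr_left fun r => by ring

end HasJacobiExpansion

theorem abs_sub_abs_isLittleO {α E : Type*} [Norm E] {l : Filter α} {f g : α → ℝ} {h : α → E}
    (hfg : (fun a => f a - g a) =o[l] h) : (fun a => |f a| - |g a|) =o[l] h :=
  (isBigO_of_le l fun a => abs_abs_sub_abs_le (f a) (g a)).trans_isLittleO hfg

theorem eventually_nonneg_pow_sub_mul_pow (n : ℕ) (κ : ℝ) :
    ∀ᶠ r : ℝ in 𝓝[>] 0, 0 ≤ r ^ n - κ * r ^ (n + 2) := by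
  have hlim : Tendsto (fun r : ℝ => 1 - κ * r ^ 2) (𝓝[>] 0) (𝓝 1) :=
    ((by fun_prop : Continuous fun r : ℝ => 1 - κ * r ^ 2).tendsto' 0 1 (by simp)).mono_left
      nhdsWithin_le_nhds
  filter_upwards [hlim.eventually_const_lt one_pos, self_mem_nhdsWithin] with r hfactor hr
  calc 0 ≤ r ^ n * (1 - κ * r ^ 2) := mul_nonneg (pow_nonneg (le_of_lt hr) n) hfactor.le
    _ = r ^ n - κ * r ^ (n + 2) := by ring

theorem abs_det_two_point_block_expansion_general {ι : Type*} [Fintype ι] [DecidableEq ι]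
    {c : ι → ℝ} {s₀ s₁ : ℝ} {A₀ A₁ B₀ B₁ : ℝ → Matrix ι ι ℝ}
    (h₀ : HasJacobiExpansion (𝓝[>] 0) c s₀ A₀ B₀) (h₁ : HasJacobiExpansion (𝓝[>] 0) c s₁ A₁ B₁) :
    (fun r => |(Matrix.fromBlocks (A₀ r) (B₀ r) (A₁ r) (B₁ r)).det| -
        |s₁ - s₀| ^ Fintype.card ι *
          (r ^ Fintype.card ι - 2 / 3 * (∑ m, c m) * r ^ (Fintype.card ι + 2)))
      =o[𝓝[>] 0] fun r => r ^ (Fintype.card ι + 2) := by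
  have habs := abs_sub_abs_isLittleO (h₀.det_fromBlocks_expansion h₁ nhdsWithin_le_nhds)
  refine habs.congr' ?_ .rfl
  filter_upwards [eventually_nonneg_pow_sub_mul_pow (Fintype.card ι) (2 / 3 * ∑ m, c m)] with r hr
  rw [abs_mul, abs_pow, abs_of_nonneg hr]

/-- **Determinant expansion for the two-point Blaschke–Petkantschin Jacobian.**
Given `d×d` matrix functions `A₀, A₁, B₀, B₁` with, as `r → 0⁺`,
`(Aᵢ)(r)_{mm} = 1 - (c_m/2) r² + o(r²)`, `(Aᵢ)(r)_{lm} = o(r)` for `l ≠ m`,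
`(B₀)(r)_{mm} = r - (c_m/6) r³ + o(r³)`, `(B₁)(r)_{mm} = -(r - (c_m/6) r³) + o(r³)`, and
`(Bᵢ)(r)_{lm} = o(r²)` for `l ≠ m`, the `2d×2d` block matrix `D(r) = [[A₀,B₀],[A₁,B₁]]`
satisfies `|det D(r)| = 2^d (r^d - (2/3)(c₁+⋯+c_d) r^{d+2}) + o(r^{d+2})`. -/
theorem abs_det_two_point_block_expansion
    (d : ℕ) (hd : 1 ≤ d) (c : Fin d → ℝ)
    (A₀ A₁ B₀ B₁ : ℝ → Matrix (Fin d) (Fin d) ℝ)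
    (hA₀diag : ∀ m, (fun r => A₀ r m m - (1 - c m / 2 * r ^ 2)) =o[𝓝[>] 0] fun r : ℝ => r ^ 2)
    (hA₁diag : ∀ m, (fun r => A₁ r m m - (1 - c m / 2 * r ^ 2)) =o[𝓝[>] 0] fun r : ℝ => r ^ 2)
    (hA₀off : ∀ l m, l ≠ m → (fun r => A₀ r l m) =o[𝓝[>] 0] fun r : ℝ => r)
    (hA₁off : ∀ l m, l ≠ m → (fun r => A₁ r l m) =o[𝓝[>] 0] fun r : ℝ => r)
    (hB₀diag : ∀ m, (fun r => B₀ r m m - (r - c m / 6 * r ^ 3)) =o[𝓝[>] 0] fun r : ℝ => r ^ 3)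
    (hB₁diag : ∀ m,
      (fun r => B₁ r m m - (-(r - c m / 6 * r ^ 3))) =o[𝓝[>] 0] fun r : ℝ => r ^ 3)
    (hB₀off : ∀ l m, l ≠ m → (fun r => B₀ r l m) =o[𝓝[>] 0] fun r : ℝ => r ^ 2)
    (hB₁off : ∀ l m, l ≠ m → (fun r => B₁ r l m) =o[𝓝[>] 0] fun r : ℝ => r ^ 2) :
    (fun r => |(Matrix.fromBlocks (A₀ r) (B₀ r) (A₁ r) (B₁ r)).det|
        - 2 ^ d * (r ^ d - 2 / 3 * (∑ m, c m) * r ^ (d + 2)))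
      =o[𝓝[>] 0] fun r : ℝ => r ^ (d + 2) := by
  have h₀ : HasJacobiExpansion (𝓝[>] 0) c 1 A₀ B₀ :=
    ⟨hA₀diag, hA₀off, by simpa only [one_mul] using hB₀diag, hB₀off⟩
  have h₁ : HasJacobiExpansion (𝓝[>] 0) c (-1) A₁ B₁ :=
    ⟨hA₁diag, hA₁off, by simpa only [neg_one_mul] using hB₁diag, hB₁off⟩
  have hspeed : |(-1 : ℝ) - 1| = 2 := by norm_num
  simpa only [hspeed, Fintype.card_fin] using abs_det_two_point_block_expansion_general h₀ h₁
end

section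
/- Let n ≥ 2. For each i = 0,…,n−1 let u_i ∈ ℝ^{n−1}, let A_i be an (n−1)×1 real column vector, let a_i be an arbitrary (n−1)×n real matrix whose last column is A_i, C_i an (n−1)×(n−1) real matrix, and B_i an (n−1)×(n−2) real matrix. Let M be the n² × n² real matrix whose rows are grouped into n blocks of n rows (one per i) and whose columns are grouped as: one column c_r, then n columns c_z, then n−1 columns c_v, then for each j a group of n−2 columns c_j, with entries: in row block i, the first row is (1 | (u_i^T, 0) | 0 | ⋯ | 0); the remaining n−1 rows are (0 | a_i | C_i | 0 ⋯ B_i ⋯ 0), where B_i occupies column group c_i, all other groups c_j (j ≠ i) being zero. Then |det M| = |det V| · |det D|, where V is the n×n matrix with i-th row (1, u_i^T), and D is the n(n−1) × n(n−1) matrix obtained by stacking, over i, the row blocks (A_i | C_i | 0 ⋯ B_i ⋯ 0). -/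
/-!
Collect the first rows of all blocks on top, and move the columns `c_r` and `c_z`, the latter
without its last column, to the left. The rearranged matrix is block lower triangular with diagonal
blocks `V` and `D`. Rearranging rows and columns only affects the sign of the determinant, so the
bijections used to view the matrices as square ones do not matter either.
-/

section BlockTriangular

variable {R m n m₁ m₂ n₁ n₂ : Type*} [CommRing R]
  [Fintype m] [DecidableEq m] [Fintype m₁] [DecidableEq m₁] [Fintype m₂] [DecidableEq m₂]

theorem det_fromBlocks_zero₁₂_submatrix_sumCongr (A : Matrix m₁ n₁ R) (C : Matrix m₂ n₁ R)
    (D : Matrix m₂ n₂ R) (e₁ : m₁ ≃ n₁) (e₂ : m₂ ≃ n₂) :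
    ((Matrix.fromBlocks A 0 C D).submatrix id (e₁.sumCongr e₂)).det =
      (A.submatrix id e₁).det * (D.submatrix id e₂).det := by
  have hblocks : (Matrix.fromBlocks A 0 C D).submatrix id (e₁.sumCongr e₂) =
      Matrix.fromBlocks (A.submatrix id e₁) 0 (C.submatrix id e₁) (D.submatrix id e₂) := by
    ext (_ | _) (_ | _) <;> rfl
  rw [hblocks, Matrix.det_fromBlocks_zero₁₂]

variable [LinearOrder R] [IsStrictOrderedRing R]

theorem abs_det_submatrix_equiv_submatrix_id (M : Matrix m n R) (r : m₁ ≃ m) (c : n₁ ≃ n)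
    (e : m ≃ n) (e₁ : m₁ ≃ n₁) :
    |((M.submatrix r c).submatrix id e₁).det| = |(M.submatrix id e).det| := by
  have hreindex : (M.submatrix r c).submatrix id e₁ =
      (M.submatrix id e).submatrix r (e₁.trans (c.trans e.symm)) := by
    ext
    simp
  rw [hreindex, Matrix.abs_det_submatrix_equiv_equiv]

theorem abs_det_submatrix_id_of_submatrix_eq_fromBlocks_zero₁₂ {M : Matrix m n R}
    {A : Matrix m₁ n₁ R} {C : Matrix m₂ n₁ R} {D : Matrix m₂ n₂ R}
    (r : m₁ ⊕ m₂ ≃ m) (c : n₁ ⊕ n₂ ≃ n)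
    (hM : M.submatrix r c = Matrix.fromBlocks A 0 C D)
    (e : m ≃ n) (e₁ : m₁ ≃ n₁) (e₂ : m₂ ≃ n₂) :
    |(M.submatrix id e).det| = |(A.submatrix id e₁).det| * |(D.submatrix id e₂).det| := by
  rw [← abs_det_submatrix_equiv_submatrix_id M r c e (e₁.sumCongr e₂), hM,
    det_fromBlocks_zero₁₂_submatrix_sumCongr, abs_mul]

end BlockTriangular

/-- The rearrangement of the rows of `M`, indexed by a block and a position in it, that lists the
first rows of all blocks before the others. -/
def firstRowsSumEquiv (ι κ : Type*) : ι ⊕ ι × κ ≃ ι × (Unit ⊕ κ) :=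
  ((Equiv.prodPUnit ι).symm.sumCongr (Equiv.refl _)).trans (Equiv.prodSumDistrib ι Unit κ).symm

/-- The rearrangement of the column groups of `M` into those of `V` followed by those of `D`:
the columns `c_z` are indexed by `σ ⊕ Unit`, and the last one is given to `D`. -/
def columnGroupsSumEquiv (σ τ π : Type*) :
    (Unit ⊕ σ) ⊕ ((Unit ⊕ τ) ⊕ π) ≃ Unit ⊕ ((σ ⊕ Unit) ⊕ (τ ⊕ π)) :=
  ((Equiv.refl _).sumCongr (Equiv.sumAssoc Unit τ π)).trans <|
    (Equiv.sumAssoc Unit σ _).trans <| (Equiv.refl _).sumCongr (Equiv.sumAssoc σ Unit _).symm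

theorem abs_det_codim_one_block_factorization_general {R ι κ σ τ π : Type*}
    [CommRing R] [LinearOrder R] [IsStrictOrderedRing R]
    [Fintype ι] [DecidableEq ι] [Fintype κ] [DecidableEq κ]
    {M : Matrix (ι × (Unit ⊕ κ)) (Unit ⊕ ((σ ⊕ Unit) ⊕ (τ ⊕ π))) R}
    {V : Matrix ι ι R} {D : Matrix (ι × κ) ((Unit ⊕ τ) ⊕ π) R} (eV : Unit ⊕ σ ≃ ι)
    (hVr : ∀ i, M (i, Sum.inl ()) (Sum.inl ()) = V i (eV (Sum.inl ())))
    (hVz : ∀ i j, M (i, Sum.inl ()) (Sum.inr (Sum.inl (Sum.inl j))) = V i (eV (Sum.inr j)))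
    (hz : ∀ i, M (i, Sum.inl ()) (Sum.inr (Sum.inl (Sum.inr ()))) = 0)
    (hv : ∀ i j, M (i, Sum.inl ()) (Sum.inr (Sum.inr (Sum.inl j))) = 0)
    (hc : ∀ i p, M (i, Sum.inl ()) (Sum.inr (Sum.inr (Sum.inr p))) = 0)
    (hDz : ∀ i l, M (i, Sum.inr l) (Sum.inr (Sum.inl (Sum.inr ()))) =
      D (i, l) (Sum.inl (Sum.inl ())))
    (hDv : ∀ i l j, M (i, Sum.inr l) (Sum.inr (Sum.inr (Sum.inl j))) =
      D (i, l) (Sum.inl (Sum.inr j)))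
    (hDc : ∀ i l p, M (i, Sum.inr l) (Sum.inr (Sum.inr (Sum.inr p))) = D (i, l) (Sum.inr p))
    (eM : ι × (Unit ⊕ κ) ≃ Unit ⊕ ((σ ⊕ Unit) ⊕ (τ ⊕ π)))
    (eD : ι × κ ≃ (Unit ⊕ τ) ⊕ π) :
    |(M.submatrix id eM).det| = |V.det| * |(D.submatrix id eD).det| := by
  let r := firstRowsSumEquiv ι κ
  let c := columnGroupsSumEquiv σ τ π
  have hblocks : M.submatrix r c =
      Matrix.fromBlocks (V.submatrix id eV) 0 (M.submatrix r c).toBlocks₂₁ D := by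
    ext (i | ⟨i, l⟩) ((_ | j) | ((_ | j) | p))
    exacts [hVr i, hVz i j, hz i, hv i j, hc i p, rfl, rfl, hDz i l, hDv i l j, hDc i l p]
  simpa using abs_det_submatrix_id_of_submatrix_eq_fromBlocks_zero₁₂ r c hblocks eM eV.symm eD

/-- **Block-determinant factorization for the `(n-1)`-point (codimension one)
Blaschke–Petkantschin Jacobian matrix**, stated with `n = m + 2 ≥ 2`.
The `n² × n²` matrix `M` has rows grouped in `n` blocks of `n` rows and columns grouped as
one column `c_r`, `n` columns `c_z` (the last of which carries the column vectors `Aᵢ`),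
`n-1` columns `c_v`, and for each `j` a group of `n-2` columns `c_j`. In row block `i` the
first row is `(1 | (uᵢᵀ, 0) | 0 | ⋯ | 0)` and the remaining `n-1` rows are
`(0 | aᵢ Aᵢ | Cᵢ | 0 ⋯ Bᵢ ⋯ 0)` with `Bᵢ` occupying column group `c_i`. Then (for any
identifications `eM`, `eD` of the respective row and column index types)
`|det M| = |det V| · |det D|`, where `V` is the `n×n` matrix with `i`-th row `(1, uᵢᵀ)` and
`D` is the `n(n-1) × n(n-1)` matrix obtained by stacking the row blocks
`(Aᵢ | Cᵢ | 0 ⋯ Bᵢ ⋯ 0)`. -/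
theorem abs_det_codim_one_block_factorization
    (m : ℕ)
    (u : Fin (m + 2) → Fin (m + 1) → ℝ)
    (a : Fin (m + 2) → Matrix (Fin (m + 1)) (Fin (m + 1)) ℝ)
    (A : Fin (m + 2) → Fin (m + 1) → ℝ)
    (C : Fin (m + 2) → Matrix (Fin (m + 1)) (Fin (m + 1)) ℝ)
    (B : Fin (m + 2) → Matrix (Fin (m + 1)) (Fin m) ℝ)
    (M : Matrix (Fin (m + 2) × (Unit ⊕ Fin (m + 1)))
          (Unit ⊕ ((Fin (m + 1) ⊕ Unit) ⊕ (Fin (m + 1) ⊕ Fin (m + 2) × Fin m))) ℝ)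
    (hM11 : ∀ i, M (i, Sum.inl ()) (Sum.inl ()) = 1)
    (hM1u : ∀ i j, M (i, Sum.inl ()) (Sum.inr (Sum.inl (Sum.inl j))) = u i j)
    (hM1z : ∀ i, M (i, Sum.inl ()) (Sum.inr (Sum.inl (Sum.inr ()))) = 0)
    (hM1v : ∀ i j, M (i, Sum.inl ()) (Sum.inr (Sum.inr (Sum.inl j))) = 0)
    (hM1B : ∀ i p, M (i, Sum.inl ()) (Sum.inr (Sum.inr (Sum.inr p))) = 0)
    (hMr : ∀ i l, M (i, Sum.inr l) (Sum.inl ()) = 0)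
    (hMa : ∀ i l j, M (i, Sum.inr l) (Sum.inr (Sum.inl (Sum.inl j))) = a i l j)
    (hMA : ∀ i l, M (i, Sum.inr l) (Sum.inr (Sum.inl (Sum.inr ()))) = A i l)
    (hMC : ∀ i l j, M (i, Sum.inr l) (Sum.inr (Sum.inr (Sum.inl j))) = C i l j)
    (hMB : ∀ i l j p,
      M (i, Sum.inr l) (Sum.inr (Sum.inr (Sum.inr (j, p)))) = if j = i then B i l p else 0)
    (D : Matrix (Fin (m + 2) × Fin (m + 1))
          ((Unit ⊕ Fin (m + 1)) ⊕ Fin (m + 2) × Fin m) ℝ)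
    (hDA : ∀ i l, D (i, l) (Sum.inl (Sum.inl ())) = A i l)
    (hDC : ∀ i l j, D (i, l) (Sum.inl (Sum.inr j)) = C i l j)
    (hDB : ∀ i l j p, D (i, l) (Sum.inr (j, p)) = if j = i then B i l p else 0)
    (eM : Fin (m + 2) × (Unit ⊕ Fin (m + 1))
          ≃ Unit ⊕ ((Fin (m + 1) ⊕ Unit) ⊕ (Fin (m + 1) ⊕ Fin (m + 2) × Fin m)))
    (eD : Fin (m + 2) × Fin (m + 1) ≃ (Unit ⊕ Fin (m + 1)) ⊕ Fin (m + 2) × Fin m) :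
    |(M.submatrix id eM).det|
      = |(Matrix.of fun i j => Fin.cons (1 : ℝ) (u i) j).det| * |(D.submatrix id eD).det| := by
  let eV : Unit ⊕ Fin (m + 1) ≃ Fin (m + 2) :=
    (Equiv.sumComm _ _).trans <| (Equiv.optionEquivSumPUnit _).symm.trans (finSuccEquiv _).symm
  exact abs_det_codim_one_block_factorization_general eV hM11 hM1u hM1z hM1v hM1B
    (fun i l => (hMA i l).trans (hDA i l).symm)
    (fun i l j => (hMC i l j).trans (hDC i l j).symm)
    (fun i l p => (hMB i l p.1 p.2).trans (hDB i l p.1 p.2).symm) eM eD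
end

section
/- Let n ≥ 1 and let Φ : (0,∞) × ℝ^n × (S^{n-1})^{n+1} → (ℝ^n)^{n+1} be defined by Φ(r, z, u_0, …, u_n) = (z + r·u_0, …, z + r·u_n). Then Φ restricts to a bijection from the set A = {(r, z, u_0, …, u_n) : u_0, …, u_n are affinely independent} onto the set of (n+1)-tuples (x_0, …, x_n) ∈ (ℝ^n)^{n+1} whose points are affinely independent. -/
/-!
The tuple `z + r • u i` lies on the sphere of center `z` and radius `r`, and `z` lies in its affine
span exactly when `0` lies in the affine span of `u`. An affinely independent tuple lies on exactly
one sphere centered in its affine span: that sphere gives `z` and `r`, and then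
`u i = r⁻¹ • (x i - z)`. When the tuple has `dim V + 1` entries, its affine span is everything and
the condition on the center disappears.
-/

open EuclideanGeometry Module
open Metric (sphere)

section DilationAt

variable {k V P ι : Type*} [Field k] [AddCommGroup V] [Module k V] [AddTorsor V P]

/-- The dilation `v ↦ r • v +ᵥ z` by a nonzero factor `r`, as an affine equivalence from the vector
space to the affine space which sends the origin to `z`. -/
def dilationAt (z : P) {r : k} (hr : r ≠ 0) : V ≃ᵃ[k] P :=
  (LinearEquiv.smulOfNeZero k V r hr).toAffineEquiv.trans (AffineEquiv.vaddConst k z)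

theorem dilationAt_apply (z : P) {r : k} (hr : r ≠ 0) (v : V) :
    dilationAt z hr v = r • v +ᵥ z :=
  rfl

theorem dilationAt_zero (z : P) {r : k} (hr : r ≠ 0) : dilationAt z hr (0 : V) = z := by
  rw [dilationAt_apply, smul_zero, zero_vadd]

theorem affineIndependent_smul_vadd_const_iff (z : P) {r : k} (hr : r ≠ 0) {u : ι → V} :
    AffineIndependent k (fun i => r • u i +ᵥ z) ↔ AffineIndependent k u :=
  (dilationAt z hr).affineIndependent_iff

theorem mem_affineSpan_range_smul_vadd_const_iff (z : P) {r : k} (hr : r ≠ 0) {u : ι → V} :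
    z ∈ affineSpan k (Set.range fun i => r • u i +ᵥ z) ↔ 0 ∈ affineSpan k (Set.range u) := by
  have hrange : (Set.range fun i => r • u i +ᵥ z) = dilationAt z hr '' Set.range u :=
    Set.range_comp (dilationAt z hr) u
  rw [← AffineSubspace.mem_map_iff_mem_of_injective (f := (dilationAt (V := V) z hr).toAffineMap)
      (dilationAt z hr).injective, AffineSubspace.map_span]
  simp only [AffineEquiv.coe_toAffineMap, dilationAt_zero, hrange]

end DilationAt

section Sphere

variable {V P ι : Type*} [MetricSpace P]

theorem radius_pos_of_mem_of_mem_of_ne {s : Sphere P} {x y : P}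
    (hx : x ∈ s) (hy : y ∈ s) (hxy : x ≠ y) : 0 < s.radius := by
  refine (Sphere.radius_nonneg_of_mem hx).lt_of_ne' fun h => hxy ?_
  rw [mem_sphere, h, dist_eq_zero] at hx hy
  exact hx.trans hy.symm

variable [NormedAddCommGroup V] [NormedSpace ℝ V] [NormedAddTorsor V P]

theorem smul_vadd_mem_sphere (z : P) {r : ℝ} (hr : 0 ≤ r) (u : sphere (0 : V) 1) :
    r • (u : V) +ᵥ z ∈ (⟨z, r⟩ : Sphere P) := by
  simp [mem_sphere, dist_vadd_left, norm_smul, abs_of_nonneg hr]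

theorem exists_eq_smul_vadd_of_mem_sphere {s : Sphere P} (hs : 0 < s.radius) {x : P}
    (hx : x ∈ s) : ∃ u : sphere (0 : V) 1, s.radius • (u : V) +ᵥ s.center = x := by
  have hnorm : ‖x -ᵥ s.center‖ = s.radius := by rw [← dist_eq_norm_vsub, mem_sphere.1 hx]
  refine ⟨⟨s.radius⁻¹ • (x -ᵥ s.center), ?_⟩, ?_⟩
  · rw [mem_sphere_zero_iff_norm, norm_smul, hnorm, norm_inv, Real.norm_of_nonneg hs.le,
      inv_mul_cancel₀ hs.ne']
  · rw [smul_inv_smul₀ hs.ne', vsub_vadd]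

/-- The map `Φ (r, z, u) = (z + r • u i)ᵢ` of the Blaschke–Petkantschin change of variables, for
tuples indexed by any type. The center `z` and the values are points of an affine space over `V`,
whence `+ᵥ`; the radius `r` ranges over all reals and is restricted to `0 < r` where needed. -/
def blaschkePetkantschinMap (p : ℝ × P × (ι → sphere (0 : V) 1)) : ι → P :=
  fun i => p.1 • (p.2.2 i : V) +ᵥ p.2.1

theorem range_blaschkePetkantschinMap_subset {p : ℝ × P × (ι → sphere (0 : V) 1)}
    (hr : 0 ≤ p.1) :
    Set.range (blaschkePetkantschinMap p) ⊆ (⟨p.2.1, p.1⟩ : Sphere P) :=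
  Set.range_subset_iff.2 fun i => smul_vadd_mem_sphere p.2.1 hr (p.2.2 i)

theorem exists_blaschkePetkantschinMap_eq {s : Sphere P} (hs : 0 < s.radius) {x : ι → P}
    (hx : Set.range x ⊆ s) :
    ∃ u : ι → sphere (0 : V) 1, blaschkePetkantschinMap (s.radius, s.center, u) = x := by
  choose u hu using fun i =>
    exists_eq_smul_vadd_of_mem_sphere (V := V) hs (hx (Set.mem_range_self i))
  exact ⟨u, funext hu⟩

theorem injective_blaschkePetkantschinMap_directions {r : ℝ} (hr : r ≠ 0) (z : P) :
    Function.Injective fun u : ι → sphere (0 : V) 1 => blaschkePetkantschinMap (r, z, u) :=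
  fun _ _ h => funext fun i => Subtype.ext ((dilationAt z hr).injective (congrFun h i))

end Sphere

section BijOn

variable {V P ι : Type*} [NormedAddCommGroup V] [InnerProductSpace ℝ V] [MetricSpace P]
  [NormedAddTorsor V P]

theorem injOn_blaschkePetkantschinMap [Finite ι] [Nonempty ι] :
    Set.InjOn (blaschkePetkantschinMap : ℝ × P × (ι → sphere (0 : V) 1) → ι → P)
      {p | 0 < p.1 ∧ AffineIndependent ℝ (fun i => (p.2.2 i : V)) ∧
        0 ∈ affineSpan ℝ (Set.range fun i => (p.2.2 i : V))} := by
  rintro ⟨r, z, u⟩ ⟨hr, hu, hu₀⟩ ⟨r', z', u'⟩ ⟨hr', -, hu₀'⟩ h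
  dsimp only at hr hu hu₀ hr' hu₀'
  have hx : AffineIndependent ℝ (blaschkePetkantschinMap (r, z, u)) :=
    (affineIndependent_smul_vadd_const_iff z hr.ne').2 hu
  have hz : z ∈ affineSpan ℝ (Set.range (blaschkePetkantschinMap (r, z, u))) :=
    (mem_affineSpan_range_smul_vadd_const_iff z hr.ne').2 hu₀
  have hz' : z' ∈ affineSpan ℝ (Set.range (blaschkePetkantschinMap (r', z', u'))) :=
    (mem_affineSpan_range_smul_vadd_const_iff z' hr'.ne').2 hu₀'
  have hsphere : (⟨z, r⟩ : Sphere P) = ⟨z', r'⟩ :=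
    hx.existsUnique_dist_eq.unique ⟨hz, range_blaschkePetkantschinMap_subset hr.le⟩
      (h ▸ ⟨hz', range_blaschkePetkantschinMap_subset hr'.le⟩)
  obtain ⟨rfl, rfl⟩ := Sphere.mk.inj hsphere
  rw [injective_blaschkePetkantschinMap_directions hr.ne' z h]

theorem surjOn_blaschkePetkantschinMap [Finite ι] [Nontrivial ι] :
    Set.SurjOn (blaschkePetkantschinMap : ℝ × P × (ι → sphere (0 : V) 1) → ι → P)
      {p | 0 < p.1 ∧ AffineIndependent ℝ (fun i => (p.2.2 i : V)) ∧
        0 ∈ affineSpan ℝ (Set.range fun i => (p.2.2 i : V))}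
      {x | AffineIndependent ℝ x} := by
  intro x hx
  obtain ⟨s, hcenter, hs⟩ := hx.existsUnique_dist_eq.exists
  obtain ⟨i, j, hij⟩ := exists_pair_ne ι
  have hr : 0 < s.radius := radius_pos_of_mem_of_mem_of_ne (hs (Set.mem_range_self i))
    (hs (Set.mem_range_self j)) (hx.injective.ne hij)
  obtain ⟨u, rfl⟩ := exists_blaschkePetkantschinMap_eq (V := V) hr hs
  exact ⟨(s.radius, s.center, u), ⟨hr,
    (affineIndependent_smul_vadd_const_iff s.center hr.ne').1 hx,
    (mem_affineSpan_range_smul_vadd_const_iff s.center hr.ne').1 hcenter⟩, rfl⟩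

theorem bijOn_blaschkePetkantschinMap [Finite ι] [Nontrivial ι] :
    Set.BijOn (blaschkePetkantschinMap : ℝ × P × (ι → sphere (0 : V) 1) → ι → P)
      {p | 0 < p.1 ∧ AffineIndependent ℝ (fun i => (p.2.2 i : V)) ∧
        0 ∈ affineSpan ℝ (Set.range fun i => (p.2.2 i : V))}
      {x | AffineIndependent ℝ x} :=
  ⟨fun p hp => (affineIndependent_smul_vadd_const_iff p.2.1 hp.1.ne').2 hp.2.1,
    injOn_blaschkePetkantschinMap, surjOn_blaschkePetkantschinMap⟩

theorem bijOn_blaschke_petkantschin_param_general [Fintype ι] [Nontrivial ι]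
    (hι : Fintype.card ι = finrank ℝ V + 1) :
    Set.BijOn (blaschkePetkantschinMap : ℝ × P × (ι → sphere (0 : V) 1) → ι → P)
      {p | 0 < p.1 ∧ AffineIndependent ℝ fun i => (p.2.2 i : V)}
      {x | AffineIndependent ℝ x} := by
  have hfinrank : 0 < finrank ℝ V := by
    have := Fintype.one_lt_card (α := ι)
    lia
  have : FiniteDimensional ℝ V := .of_finrank_pos hfinrank
  have hspan {u : ι → V} (hu : AffineIndependent ℝ u) : 0 ∈ affineSpan ℝ (Set.range u) := by
    rw [hu.affineSpan_eq_top_iff_card_eq_finrank_add_one.2 hι]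
    exact AffineSubspace.mem_top ℝ V 0
  convert bijOn_blaschkePetkantschinMap (V := V) (P := P) (ι := ι) using 4
  exact (and_iff_left_of_imp hspan).symm

end BijOn

/-- **The spherical Blaschke–Petkantschin change of variables is a bijection.**
The map `Φ(r, z, u₀, …, uₙ) = (z + r·u₀, …, z + r·uₙ)`, defined on
`ℝ × ℝⁿ × (S^{n-1})^{n+1}`, restricts to a bijection from the set of tuples with `r > 0`
and `u₀, …, uₙ` affinely independent onto the set of affinely independent
`(n+1)`-tuples of points of ℝⁿ. -/
theorem bijOn_blaschke_petkantschin_param (n : ℕ) (hn : 1 ≤ n) :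
    Set.BijOn
      (fun p : ℝ × EuclideanSpace ℝ (Fin n) ×
          (Fin (n + 1) → Metric.sphere (0 : EuclideanSpace ℝ (Fin n)) 1) =>
        fun i => p.2.1 + p.1 • (p.2.2 i : EuclideanSpace ℝ (Fin n)))
      {p | 0 < p.1 ∧ AffineIndependent ℝ fun i => (p.2.2 i : EuclideanSpace ℝ (Fin n))}
      {x : Fin (n + 1) → EuclideanSpace ℝ (Fin n) | AffineIndependent ℝ x} := by
  have : Nontrivial (Fin (n + 1)) := Fin.nontrivial_iff_two_le.2 (by lia)
  exact (bijOn_blaschke_petkantschin_param_general (by simp)).congr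
    fun p _ => funext fun i => add_comm _ _
end
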